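/- arXiv:math/0306218 — 2 statements merged into one kernel-verified Lean document; each statement's English description precedes it below -/
import Mathlib

section
/- For every θ with 0 < θ < π and every α > 1, D_α = sin(θ/α)/sin(π/α). Consequently α ↦ D_α is strictly decreasing on (1,∞), D_α → ∞ as α → 1⁺, D_α → θ/π as α → ∞, and α_θ := 1 + θ/π is the unique α > 1 with D_α = 1. -/
open Filter Asymptotics MeasureTheory
open scoped ENNReal Topology

/-- `Theta θ E' E` is the argument of the complex number `E' + E·e^{iθ}`;
for `0 < θ < π` and `E', E > 0` it lies in `(0, θ)` and equals
`arctan (sin θ / (E'/E + cos θ))` with the branch taken in `(0, θ)`. -/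
noncomputable def Theta (θ E' E : ℝ) : ℝ :=
  Complex.arg ((E' : ℂ) + (E : ℂ) * Complex.exp (θ * Complex.I))

/-- `phi θ X Y j = (1/π) · ∑_{k ≥ 1} Θ(X_k, Y_j) ∈ (0, ∞]`, where sequences are
indexed by `ℕ` and only the values at indices `k ≥ 1` are used. -/
noncomputable def phi (θ : ℝ) (X Y : ℕ → ℝ) (j : ℕ) : ℝ≥0∞ :=
  ENNReal.ofReal (1 / Real.pi) * ∑' k : ℕ, ENNReal.ofReal (Theta θ (X (k + 1)) (Y j))

/-- `Pker θ E E' = E·E' / (E² + 2·cos θ·E·E' + E'²)`. -/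
noncomputable def Pker (θ E E' : ℝ) : ℝ :=
  E * E' / (E ^ 2 + 2 * Real.cos θ * E * E' + E' ^ 2)

/-- The drift `D_α = (1/π) ∫_0^∞ Θ(s^α, 1) ds`. -/
noncomputable def Drift (θ α : ℝ) : ℝ :=
  (1 / Real.pi) * ∫ s in Set.Ioi (0 : ℝ), Theta θ (s ^ α) 1

/-- `S_ε = ∫_0^∞ s^{-ε} / (s^{α_θ} + 2 cos θ + s^{-α_θ}) ds` with `α_θ = 1 + θ/π`. -/
noncomputable def Sfun (θ ε : ℝ) : ℝ :=
  ∫ s in Set.Ioi (0 : ℝ), s ^ (-ε) /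
    (s ^ (1 + θ / Real.pi) + 2 * Real.cos θ + s ^ (-(1 + θ / Real.pi)))

/-- The integrand `log (1 + z s^{-α})`, written without division. -/
noncomputable def gint (α : ℝ) (z : ℂ) (s : ℝ) : ℂ :=
  Complex.log (((s ^ α : ℝ) : ℂ) + z) - ((α * Real.log s : ℝ) : ℂ)

lemma gint_measurable (α : ℝ) (z : ℂ) : Measurable (gint α z) := by
  unfold gint
  fun_prop

lemma add_mem_slit {z : ℂ} (hz : z ∈ Complex.slitPlane) {t : ℝ} (ht : 0 ≤ t) :
    (t : ℂ) + z ∈ Complex.slitPlane := by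
  rw [Complex.mem_slitPlane_iff] at *
  rcases hz with h | h
  · left; simp; linarith
  · right; simpa using h

lemma slit_lower {z : ℂ} (hz : z ∈ Complex.slitPlane) :
    ∃ c : ℝ, 0 < c ∧ ∀ t : ℝ, 0 ≤ t → c * (1 + t) ≤ ‖(t : ℂ) + z‖ := by
  have hd : ∃ d : ℝ, 0 < d ∧ ∀ t : ℝ, 0 ≤ t → d ≤ ‖(t : ℂ) + z‖ := by
    rw [Complex.mem_slitPlane_iff] at hz
    rcases hz with h | h
    · refine ⟨z.re, h, fun t ht => ?_⟩
      have := Complex.re_le_norm ((t : ℂ) + z)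
      simp at this; linarith
    · refine ⟨|z.im|, abs_pos.2 h, fun t ht => ?_⟩
      have := Complex.abs_im_le_norm ((t : ℂ) + z)
      simpa using this
  obtain ⟨d, hd, h⟩ := hd
  have hK : 0 < (1 + ‖z‖) / d + 1 := by positivity
  refine ⟨((1 + ‖z‖) / d + 1)⁻¹, by positivity, fun t ht => ?_⟩
  rw [inv_mul_le_iff₀ hK]
  have h1 : t ≤ ‖(t : ℂ) + z‖ + ‖z‖ := by
    have := norm_sub_le ((t : ℂ) + z) z
    simp only [add_sub_cancel_right, Complex.norm_real, Real.norm_eq_abs, abs_of_nonneg ht] at this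
    exact this
  have h2 : 1 + ‖z‖ ≤ (1 + ‖z‖) / d * ‖(t : ℂ) + z‖ := by
    rw [div_mul_eq_mul_div, le_div_iff₀ hd]
    exact mul_le_mul_of_nonneg_left (h t ht) (by positivity)
  linarith

lemma int_base {α : ℝ} (hα : 1 < α) :
    IntegrableOn (fun s : ℝ => (1 + s ^ α)⁻¹) (Set.Ioi 0) := by
  have hm : Measurable (fun s : ℝ => (1 + s ^ α)⁻¹) := by fun_prop
  rw [← Set.Ioc_union_Ioi_eq_Ioi (zero_le_one : (0:ℝ) ≤ 1)]
  refine IntegrableOn.union ?_ ?_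
  · refine Integrable.mono' (g := fun _ => (1:ℝ)) ?_ hm.aestronglyMeasurable ?_
    · exact integrableOn_const (by simp)
    · filter_upwards [ae_restrict_mem measurableSet_Ioc] with s hs
      have : 0 ≤ s ^ α := Real.rpow_nonneg hs.1.le _
      rw [Real.norm_of_nonneg (by positivity)]
      exact inv_le_one_of_one_le₀ (by linarith)
  · refine Integrable.mono' (integrableOn_Ioi_rpow_of_lt (a := -α) (by linarith) one_pos)
      hm.aestronglyMeasurable ?_
    filter_upwards [ae_restrict_mem measurableSet_Ioi] with s hs
    have hs0 : 0 < s := lt_trans one_pos hs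
    have : 0 < s ^ α := Real.rpow_pos_of_pos hs0 _
    rw [Real.norm_of_nonneg (by positivity), Real.rpow_neg hs0.le]
    exact inv_anti₀ this (by linarith)

lemma gint_eq {α : ℝ} {z : ℂ} (hz : z ∈ Complex.slitPlane) {s : ℝ} (hs : 0 < s) :
    gint α z s = Complex.log (1 + z * ((s ^ (-α) : ℝ) : ℂ)) := by
  have hp : 0 < s ^ α := Real.rpow_pos_of_pos hs _
  have hne := Complex.slitPlane_ne_zero (add_mem_slit hz hp.le)
  have : (1 + z * ((s ^ (-α) : ℝ) : ℂ)) = ((s ^ (-α) : ℝ) : ℂ) * (((s ^ α : ℝ) : ℂ) + z) := by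
    have h1 : ((s ^ (-α) : ℝ) : ℂ) * ((s ^ α : ℝ) : ℂ) = 1 := by
      rw [← Complex.ofReal_mul, ← Real.rpow_add hs]; simp
    rw [mul_add, h1]; ring
  rw [this, Complex.log_ofReal_mul (Real.rpow_pos_of_pos hs _) hne, Real.log_rpow hs, gint]
  push_cast; ring

lemma gint_bound {α : ℝ} {z : ℂ} (hz : z ∈ Complex.slitPlane) {s : ℝ} (hs : 0 < s)
    (h : 2 * ‖z‖ ≤ s ^ α) : ‖gint α z s‖ ≤ 3 / 2 * (‖z‖ * s ^ (-α)) := by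
  have hp : 0 < s ^ α := Real.rpow_pos_of_pos hs _
  rw [gint_eq hz hs]
  have hn : ‖z * ((s ^ (-α) : ℝ) : ℂ)‖ = ‖z‖ * s ^ (-α) := by
    rw [norm_mul, Complex.norm_real, Real.norm_of_nonneg (Real.rpow_nonneg hs.le _)]
  rw [← hn]
  apply Complex.norm_log_one_add_half_le_self
  rw [hn, Real.rpow_neg hs.le, ← div_eq_mul_inv, div_le_iff₀ hp]
  linarith

lemma gint_integrable {α : ℝ} (hα : 1 < α) {z : ℂ} (hz : z ∈ Complex.slitPlane) :
    IntegrableOn (gint α z) (Set.Ioi 0) := by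
  have hα0 : 0 < α := by linarith
  -- cut at M
  obtain ⟨M, hM0, hM⟩ : ∃ M : ℝ, 0 < M ∧ ∀ s, M < s → 2 * ‖z‖ ≤ s ^ α := by
    have := (tendsto_rpow_atTop hα0).eventually_ge_atTop (2 * ‖z‖)
    obtain ⟨M, hM⟩ := eventually_atTop.1 this
    exact ⟨max M 1, by positivity, fun s hs => hM s ((le_max_left _ _).trans hs.le)⟩
  rw [← Set.Ioc_union_Ioi_eq_Ioi hM0.le]
  refine IntegrableOn.union ?_ ?_
  · unfold gint
    refine Integrable.sub ?_ ?_
    · have : ContinuousOn (fun s : ℝ => Complex.log (((s ^ α : ℝ) : ℂ) + z)) (Set.Icc 0 M) := by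
        refine ContinuousOn.clog ?_ ?_
        · have := Real.continuous_rpow_const hα0.le
          fun_prop
        · intro s hs
          exact add_mem_slit hz (Real.rpow_nonneg hs.1 _)
      exact (this.integrableOn_compact isCompact_Icc).mono_set Set.Ioc_subset_Icc_self
    · have h1 : IntegrableOn (fun s => α * Real.log s) (Set.Ioc 0 M) := by
        have := (intervalIntegral.intervalIntegrable_log' (a := 0) (b := M)).1
        exact Integrable.const_mul this α
      exact Integrable.ofReal h1
  · refine Integrable.mono' (g := fun s => 3 / 2 * (‖z‖ * s ^ (-α))) ?_
      (gint_measurable α z).aestronglyMeasurable ?_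
    · exact ((integrableOn_Ioi_rpow_of_lt (a := -α) (by linarith) hM0).const_mul _).const_mul _
    · filter_upwards [ae_restrict_mem measurableSet_Ioi] with s hs
      exact gint_bound hz (hM0.trans hs) (hM s hs)

/-- The integral of `gint`. -/
noncomputable def Gfun (α : ℝ) (z : ℂ) : ℂ := ∫ s in Set.Ioi (0 : ℝ), gint α z s

lemma Gfun_diff {α : ℝ} (hα : 1 < α) :
    DifferentiableOn ℂ (Gfun α) Complex.slitPlane := by
  intro z hz
  obtain ⟨c, hc, hb⟩ := slit_lower hz
  apply DifferentiableAt.differentiableWithinAt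
  have hs : Metric.ball z (c / 2) ∩ Complex.slitPlane ∈ 𝓝 z :=
    inter_mem (Metric.ball_mem_nhds _ (by positivity)) (Complex.isOpen_slitPlane.mem_nhds hz)
  refine (hasDerivAt_integral_of_dominated_loc_of_deriv_le (𝕜 := ℂ)
    (μ := volume.restrict (Set.Ioi 0)) (F := gint α)
    (F' := fun w s => (((s ^ α : ℝ) : ℂ) + w)⁻¹) (bound := fun s => 2 / c * (1 + s ^ α)⁻¹)
    hs ?_ (gint_integrable hα hz) ?_ ?_ ?_ ?_).2.differentiableAt
  · exact Eventually.of_forall fun w => (gint_measurable α w).aestronglyMeasurable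
  · apply Measurable.aestronglyMeasurable
    fun_prop
  · filter_upwards [ae_restrict_mem measurableSet_Ioi] with s hs w hw
    have hp : 0 < s ^ α := Real.rpow_pos_of_pos hs _
    have h1 := hb _ hp.le
    have h2 : ‖z - w‖ < c / 2 := by
      have := hw.1
      rwa [Metric.mem_ball, dist_comm, dist_eq_norm] at this
    have h3 : ‖((s ^ α : ℝ) : ℂ) + z‖ ≤ ‖((s ^ α : ℝ) : ℂ) + w‖ + ‖z - w‖ := by
      have := norm_add_le (((s ^ α : ℝ) : ℂ) + w) (z - w)
      rwa [show ((s ^ α : ℝ) : ℂ) + w + (z - w) = ((s ^ α : ℝ) : ℂ) + z by ring] at this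
    have h4 : c / 2 * (1 + s ^ α) ≤ ‖((s ^ α : ℝ) : ℂ) + w‖ := by nlinarith
    rw [norm_inv]
    calc _ ≤ (c / 2 * (1 + s ^ α))⁻¹ := inv_anti₀ (by positivity) h4
      _ = _ := by rw [mul_inv, inv_div]
  · exact (int_base hα).const_mul _
  · filter_upwards [ae_restrict_mem measurableSet_Ioi] with s hs w hw
    have hp : 0 < s ^ α := Real.rpow_pos_of_pos hs _
    unfold gint
    have h1 : HasDerivAt (fun w : ℂ => ((s ^ α : ℝ) : ℂ) + w) 1 w :=
      (hasDerivAt_id w).const_add _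
    have := (h1.clog (add_mem_slit hw.2 hp.le)).sub_const ((α * Real.log s : ℝ) : ℂ)
    simpa using this

lemma Gfun_scale {α : ℝ} (hα : 1 < α) {r : ℝ} (hr : 0 < r) :
    Gfun α r = ((r : ℂ) ^ ((1 / α : ℝ) : ℂ)) * Gfun α 1 := by
  have hα0 : 0 < α := by linarith
  have hb : 0 < r ^ (1 / α) := Real.rpow_pos_of_pos hr _
  have := integral_comp_mul_left_Ioi' (gint α r) 0 hb
  rw [mul_zero] at this
  unfold Gfun
  rw [← this, ← Complex.ofReal_cpow hr.le, Complex.real_smul]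
  congr 1
  refine setIntegral_congr_fun measurableSet_Ioi fun u hu => ?_
  have hu : 0 < u := hu
  have hp : 0 < u ^ α := Real.rpow_pos_of_pos hu _
  simp only [gint]
  have e1 : (r ^ (1 / α) * u) ^ α = r * u ^ α := by
    rw [Real.mul_rpow hb.le hu.le, ← Real.rpow_mul hr.le, one_div, inv_mul_cancel₀ hα0.ne',
      Real.rpow_one]
  have e2 : Real.log (r ^ (1 / α) * u) = 1 / α * Real.log r + Real.log u := by
    rw [Real.log_mul hb.ne' hu.ne', Real.log_rpow hr]
  have e3 : ((r * u ^ α : ℝ) : ℂ) + r = r * (((u ^ α : ℝ) : ℂ) + 1) := by push_cast; ring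
  have hne : ((u ^ α : ℝ) : ℂ) + 1 ≠ 0 :=
    Complex.slitPlane_ne_zero (add_mem_slit Complex.one_mem_slitPlane hp.le)
  have e4 : α * (1 / α * Real.log r + Real.log u) = Real.log r + α * Real.log u := by
    field_simp
  rw [e1, e2, e3, Complex.log_ofReal_mul hr hne, e4]
  push_cast; ring

lemma Gfun_eq {α : ℝ} (hα : 1 < α) {z : ℂ} (hz : z ∈ Complex.slitPlane) :
    Gfun α z = (z ^ ((1 / α : ℝ) : ℂ)) * Gfun α 1 := by
  have hA := (Gfun_diff hα).analyticOnNhd Complex.isOpen_slitPlane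
  have hB : AnalyticOnNhd ℂ (fun z : ℂ => (z ^ ((1 / α : ℝ) : ℂ)) * Gfun α 1)
      Complex.slitPlane := by
    apply DifferentiableOn.analyticOnNhd _ Complex.isOpen_slitPlane
    intro w hw
    exact (((hasStrictDerivAt_id w).hasDerivAt.cpow_const hw).differentiableAt.mul_const
      _).differentiableWithinAt
  have hconn : IsPreconnected Complex.slitPlane :=
    (Complex.starConvex_one_slitPlane.isPathConnected
      Complex.one_mem_slitPlane).isConnected.isPreconnected
  refine hA.eqOn_of_preconnected_of_frequently_eq hB hconn Complex.one_mem_slitPlane ?_ hz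
  have ht : Tendsto (fun x : ℝ => (x : ℂ)) (𝓝[>] 1) (𝓝[≠] 1) := by
    apply tendsto_nhdsWithin_of_tendsto_nhds_of_eventually_within
    · have := (Complex.continuous_ofReal.tendsto 1)
      simp only [Complex.ofReal_one] at this
      exact this.mono_left nhdsWithin_le_nhds
    · filter_upwards [self_mem_nhdsWithin] with x hx
      have hx : 1 < x := hx
      simp only [Set.mem_compl_iff, Set.mem_singleton_iff]
      exact_mod_cast hx.ne'
  apply ht.frequently
  apply Eventually.frequently
  filter_upwards [self_mem_nhdsWithin] with x hx
  exact Gfun_scale hα (lt_trans one_pos hx)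

lemma gint_im (α : ℝ) (z : ℂ) (s : ℝ) :
    (gint α z s).im = Complex.arg (((s ^ α : ℝ) : ℂ) + z) := by
  simp only [gint, Complex.sub_im, Complex.log_im, Complex.ofReal_im, sub_zero]

lemma Gfun_im {α : ℝ} (hα : 1 < α) {z : ℂ} (hz : z ∈ Complex.slitPlane) :
    ∫ s in Set.Ioi (0 : ℝ), Complex.arg (((s ^ α : ℝ) : ℂ) + z) = (Gfun α z).im := by
  have := integral_im (gint_integrable hα hz)
  simp only [RCLike.im_to_complex, gint_im] at this
  exact this

lemma exp_mem_slit {θ : ℝ} (h0 : 0 < θ) (h1 : θ < Real.pi) :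
    Complex.exp (θ * Complex.I) ∈ Complex.slitPlane := by
  rw [Complex.mem_slitPlane_iff]
  right
  rw [Complex.exp_ofReal_mul_I_im]
  exact (Real.sin_pos_of_pos_of_lt_pi h0 h1).ne'

lemma Theta_int {α θ : ℝ} (hα : 1 < α) (h0 : 0 < θ) (h1 : θ < Real.pi) :
    ∫ s in Set.Ioi (0 : ℝ), Theta θ (s ^ α) 1 = Real.sin (θ / α) * (Gfun α 1).re := by
  have hz := exp_mem_slit h0 h1
  have him : (Gfun α 1).im = 0 := by
    rw [← Gfun_im hα Complex.one_mem_slitPlane]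
    rw [setIntegral_congr_fun (g := fun _ => (0:ℝ)) measurableSet_Ioi]
    · simp
    · intro s hs
      have hp : 0 < s ^ α := Real.rpow_pos_of_pos hs _
      have : ((s ^ α : ℝ) : ℂ) + 1 = ((s ^ α + 1 : ℝ) : ℂ) := by push_cast; rfl
      simp only [this]
      exact Complex.arg_ofReal_of_nonneg (by linarith)
  have hpow : Complex.exp (θ * Complex.I) ^ ((1 / α : ℝ) : ℂ)
      = Complex.exp (((θ / α : ℝ) : ℂ) * Complex.I) := by
    rw [Complex.cpow_def_of_ne_zero (Complex.exp_ne_zero _), Complex.log_exp]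
    · congr 1; push_cast; ring
    · simp; linarith
    · simp; linarith
  simp only [Theta, Complex.ofReal_one, one_mul]
  rw [Gfun_im hα hz, Gfun_eq hα hz, hpow, Complex.mul_im, him, Complex.exp_ofReal_mul_I_im]
  simp

lemma Theta_bound {α θ : ℝ} (h0 : 0 < θ) (h1 : θ < Real.pi) {s : ℝ} (hs : 0 < s) :
    ‖Theta θ (s ^ α) 1‖ ≤ 3 * Real.pi * (1 + s ^ α)⁻¹ := by
  have hp : 0 < s ^ α := Real.rpow_pos_of_pos hs _
  have hpi := Real.pi_gt_three
  have hz := exp_mem_slit h0 h1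
  have hn : ‖Complex.exp (θ * Complex.I)‖ = 1 := Complex.norm_exp_ofReal_mul_I θ
  have hT : Theta θ (s ^ α) 1 = (gint α (Complex.exp (θ * Complex.I)) s).im := by
    rw [gint_im, Theta]; simp
  rw [← div_eq_mul_inv, le_div_iff₀ (by positivity)]
  rcases lt_or_ge (s ^ α) 2 with h | h
  · have h2 : ‖Theta θ (s ^ α) 1‖ ≤ Real.pi := Complex.abs_arg_le_pi _
    nlinarith [norm_nonneg (Theta θ (s ^ α) 1)]
  · have h2 := gint_bound (α := α) hz hs (by rw [hn]; linarith)
    have h3 : ‖Theta θ (s ^ α) 1‖ ≤ 3 / 2 * (s ^ α)⁻¹ := by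
      rw [hT, Real.norm_eq_abs]
      refine (Complex.abs_im_le_norm _).trans ?_
      rwa [hn, one_mul, Real.rpow_neg hs.le] at h2
    calc _ ≤ 3 / 2 * (s ^ α)⁻¹ * (1 + s ^ α) := by gcongr
      _ = 3 / 2 * (s ^ α)⁻¹ + 3 / 2 := by field_simp
      _ ≤ _ := by
        have : (s ^ α)⁻¹ ≤ 1 := inv_le_one_of_one_le₀ (by linarith)
        linarith

lemma Theta_lim {α : ℝ} (hα : 1 < α) {s : ℝ} (hs : 0 < s) (hs1 : s ≠ 1) :
    Tendsto (fun θ => Theta θ (s ^ α) 1) (𝓝[<] Real.pi)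
      (𝓝 (Set.indicator (Set.Ioc 0 1) (fun _ => Real.pi) s)) := by
  have hα0 : 0 < α := by linarith
  have hc : Tendsto (fun θ : ℝ => ((s ^ α : ℝ) : ℂ) + ((1 : ℝ) : ℂ) * Complex.exp (θ * Complex.I))
      (𝓝[<] Real.pi) (𝓝 ((s ^ α - 1 : ℝ) : ℂ)) := by
    have : Continuous (fun θ : ℝ => ((s ^ α : ℝ) : ℂ) +
      ((1 : ℝ) : ℂ) * Complex.exp (θ * Complex.I)) := by fun_prop
    have h := this.tendsto Real.pi
    rw [Complex.exp_pi_mul_I] at h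
    convert h.mono_left nhdsWithin_le_nhds using 2
    push_cast; ring
  unfold Theta
  rcases lt_or_gt_of_ne hs1 with h | h
  · rw [Set.indicator_of_mem (show s ∈ Set.Ioc 0 1 from ⟨hs, h.le⟩)]
    have hlt : s ^ α < 1 := Real.rpow_lt_one hs.le h hα0
    refine (Complex.tendsto_arg_nhdsWithin_im_nonneg_of_re_neg_of_im_zero
      (z := ((s ^ α - 1 : ℝ) : ℂ)) ?_ ?_).comp
      (tendsto_nhdsWithin_of_tendsto_nhds_of_eventually_within _ hc ?_)
    · rw [Complex.ofReal_re]; linarith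
    · exact Complex.ofReal_im _
    · have : Set.Ioo 0 Real.pi ∈ 𝓝[<] Real.pi := Ioo_mem_nhdsLT Real.pi_pos
      filter_upwards [this] with θ hθ
      have := Real.sin_pos_of_pos_of_lt_pi hθ.1 hθ.2
      simp only [Set.mem_setOf_eq, Complex.add_im, Complex.ofReal_im, Complex.ofReal_one, one_mul,
        Complex.exp_ofReal_mul_I_im]
      linarith
  · rw [Set.indicator_of_notMem (fun hh => absurd hh.2 (not_le.2 h))]
    have hlt : 1 < s ^ α := Real.one_lt_rpow h hα0
    have h0 : Complex.arg ((s ^ α - 1 : ℝ) : ℂ) = 0 := Complex.arg_ofReal_of_nonneg (by linarith)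
    rw [← h0]
    refine (Complex.continuousAt_arg ?_).tendsto.comp hc
    rw [Complex.ofReal_mem_slitPlane]; linarith

lemma Gconst {α : ℝ} (hα : 1 < α) : Real.sin (Real.pi / α) * (Gfun α 1).re = Real.pi := by
  have hα0 : 0 < α := by linarith
  have hev : Set.Ioo 0 Real.pi ∈ 𝓝[<] Real.pi := Ioo_mem_nhdsLT Real.pi_pos
  have h1 : Tendsto (fun θ => ∫ s in Set.Ioi (0 : ℝ), Theta θ (s ^ α) 1) (𝓝[<] Real.pi)
      (𝓝 (∫ s in Set.Ioi (0 : ℝ), Set.indicator (Set.Ioc 0 1) (fun _ => Real.pi) s)) := by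
    refine tendsto_integral_filter_of_dominated_convergence
      (fun s => 3 * Real.pi * (1 + s ^ α)⁻¹) ?_ ?_ ((int_base hα).const_mul _) ?_
    · refine Eventually.of_forall fun θ => Measurable.aestronglyMeasurable ?_
      unfold Theta
      fun_prop
    · filter_upwards [hev] with θ hθ
      filter_upwards [ae_restrict_mem measurableSet_Ioi] with s hs
      exact Theta_bound hθ.1 hθ.2 hs
    · have hne : ∀ᵐ s : ℝ ∂(volume.restrict (Set.Ioi 0)), s ≠ 1 :=
        Measure.ae_ne _ _
      filter_upwards [ae_restrict_mem measurableSet_Ioi, hne] with s hs hs1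
      exact Theta_lim hα hs hs1
  have h2 : (∫ s in Set.Ioi (0 : ℝ), Set.indicator (Set.Ioc 0 1) (fun _ => Real.pi) s)
      = Real.pi := by
    rw [setIntegral_indicator measurableSet_Ioc,
      Set.inter_eq_right.2 (Set.Ioc_subset_Ioi_self)]
    simp
  rw [h2] at h1
  have h3 : Tendsto (fun θ => Real.sin (θ / α) * (Gfun α 1).re) (𝓝[<] Real.pi)
      (𝓝 (Real.sin (Real.pi / α) * (Gfun α 1).re)) := by
    have : Continuous (fun θ => Real.sin (θ / α) * (Gfun α 1).re) := by fun_prop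
    exact (this.tendsto _).mono_left nhdsWithin_le_nhds
  refine tendsto_nhds_unique h3 (h1.congr' ?_)
  filter_upwards [hev] with θ hθ
  exact Theta_int hα hθ.1 hθ.2

lemma sin_pi_div_pos {α : ℝ} (hα : 1 < α) : 0 < Real.sin (Real.pi / α) :=
  Real.sin_pos_of_pos_of_lt_pi (div_pos Real.pi_pos (by linarith)) (div_lt_self Real.pi_pos hα)

lemma Drift_eq {α θ : ℝ} (hα : 1 < α) (h0 : 0 < θ) (h1 : θ < Real.pi) :
    Drift θ α = Real.sin (θ / α) / Real.sin (Real.pi / α) := by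
  have h := Gconst hα
  have hs := sin_pi_div_pos hα
  have hpi := Real.pi_pos
  rw [Drift, Theta_int hα h0 h1, eq_div_iff hs.ne']
  calc _ = 1 / Real.pi * Real.sin (θ / α) * (Real.sin (Real.pi / α) * (Gfun α 1).re) := by ring
    _ = _ := by rw [h]; field_simp

lemma ratio_mono {θ : ℝ} (h0 : 0 < θ) (h1 : θ < Real.pi) :
    StrictMonoOn (fun t => Real.sin (θ * t) / Real.sin (Real.pi * t)) (Set.Ioo 0 1) := by
  have hpi := Real.pi_pos
  have hsθ : ∀ t ∈ Set.Ioo (0:ℝ) 1, 0 < Real.sin (θ * t) := fun t ht =>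
    Real.sin_pos_of_pos_of_lt_pi (mul_pos h0 ht.1) (by nlinarith [ht.1, ht.2])
  have hsπ : ∀ t ∈ Set.Ioo (0:ℝ) 1, 0 < Real.sin (Real.pi * t) := fun t ht =>
    Real.sin_pos_of_pos_of_lt_pi (mul_pos hpi ht.1) (by nlinarith [ht.1, ht.2])
  have ds : ∀ a t : ℝ, HasDerivAt (fun t => Real.sin (a * t)) (Real.cos (a * t) * a) t := by
    intro a t
    have := ((hasDerivAt_id t).const_mul a).sin
    simpa using this
  have dc : ∀ a t : ℝ, HasDerivAt (fun t => Real.cos (a * t)) (-Real.sin (a * t) * a) t := by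
    intro a t
    have := ((hasDerivAt_id t).const_mul a).cos
    simpa using this
  let h : ℝ → ℝ := fun t => Real.cos (θ * t) * θ * Real.sin (Real.pi * t) -
    Real.sin (θ * t) * (Real.cos (Real.pi * t) * Real.pi)
  have hh : StrictMonoOn h (Set.Icc 0 1) := by
    refine strictMonoOn_of_deriv_pos (convex_Icc 0 1) (by fun_prop) ?_
    intro t ht
    rw [interior_Icc] at ht
    have hd : HasDerivAt h ((Real.pi ^ 2 - θ ^ 2) * (Real.sin (θ * t) * Real.sin (Real.pi * t))) t := by
      have := (((dc θ t).mul_const θ).mul (ds Real.pi t)).sub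
        ((ds θ t).mul ((dc Real.pi t).mul_const Real.pi))
      exact this.congr_deriv (by ring)
    rw [hd.deriv]
    have : 0 < Real.pi ^ 2 - θ ^ 2 := by nlinarith
    exact mul_pos this (mul_pos (hsθ t ht) (hsπ t ht))
  have hpos : ∀ t ∈ Set.Ioo (0:ℝ) 1, 0 < h t := by
    intro t ht
    have := hh (Set.left_mem_Icc.2 zero_le_one) (Set.Ioo_subset_Icc_self ht) ht.1
    simpa [h] using this
  have hdr : ∀ t ∈ Set.Ioo (0:ℝ) 1, HasDerivAt
      (fun t => Real.sin (θ * t) / Real.sin (Real.pi * t)) (h t / Real.sin (Real.pi * t) ^ 2) t :=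
    fun t ht => (ds θ t).div (ds Real.pi t) (hsπ t ht).ne'
  refine strictMonoOn_of_deriv_pos (convex_Ioo 0 1)
    (fun t ht => (hdr t ht).continuousAt.continuousWithinAt) ?_
  intro t ht
  rw [interior_Ioo] at ht
  rw [(hdr t ht).deriv]
  exact div_pos (hpos t ht) (pow_pos (hsπ t ht) 2)

lemma Drift_anti {θ : ℝ} (h0 : 0 < θ) (h1 : θ < Real.pi) :
    StrictAntiOn (Drift θ) (Set.Ioi 1) := by
  intro a ha b hb hab
  have ha : 1 < a := ha
  have hb : 1 < b := hb
  have ha0 : 0 < a := by linarith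
  have hb0 : 0 < b := by linarith
  rw [Drift_eq ha h0 h1, Drift_eq hb h0 h1]
  exact ratio_mono h0 h1 ⟨inv_pos.2 hb0, inv_lt_one_of_one_lt₀ hb⟩
    ⟨inv_pos.2 ha0, inv_lt_one_of_one_lt₀ ha⟩ (inv_strictAnti₀ ha0 hab)

lemma Drift_one {θ : ℝ} (h0 : 0 < θ) (h1 : θ < Real.pi) : Drift θ (1 + θ / Real.pi) = 1 := by
  have hpi := Real.pi_pos
  have hα : 1 < 1 + θ / Real.pi := by have := div_pos h0 hpi; linarith
  rw [Drift_eq hα h0 h1, div_eq_one_iff_eq (sin_pi_div_pos hα).ne', ← Real.sin_pi_sub]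
  congr 1
  field_simp
  ring

lemma Drift_atTop {θ : ℝ} (h0 : 0 < θ) (h1 : θ < Real.pi) :
    Tendsto (Drift θ) (𝓝[>] 1) atTop := by
  have hev : Drift θ =ᶠ[𝓝[>] 1] fun α => Real.sin (θ / α) * (Real.sin (Real.pi / α))⁻¹ := by
    filter_upwards [self_mem_nhdsWithin] with α hα
    rw [Drift_eq hα h0 h1, div_eq_mul_inv]
  refine Tendsto.congr' hev.symm ?_
  have hc : ∀ a : ℝ, Tendsto (fun α => Real.sin (a / α)) (𝓝[>] 1) (𝓝 (Real.sin a)) := by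
    intro a
    have : ContinuousAt (fun α => Real.sin (a / α)) 1 :=
      Real.continuous_sin.continuousAt.comp
        (ContinuousAt.div continuousAt_const continuousAt_id one_ne_zero)
    have := this.tendsto.mono_left (nhdsWithin_le_nhds (s := Set.Ioi 1))
    simpa using this
  refine Tendsto.pos_mul_atTop (Real.sin_pos_of_pos_of_lt_pi h0 h1) (hc θ) ?_
  refine tendsto_inv_nhdsGT_zero.comp ?_
  refine tendsto_nhdsWithin_of_tendsto_nhds_of_eventually_within _ ?_ ?_
  · simpa using hc Real.pi
  · filter_upwards [self_mem_nhdsWithin] with α hα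
    exact sin_pi_div_pos hα

lemma Drift_lim {θ : ℝ} (h0 : 0 < θ) (h1 : θ < Real.pi) :
    Tendsto (Drift θ) atTop (𝓝 (θ / Real.pi)) := by
  have hs : ∀ a : ℝ, Tendsto (fun α => α * Real.sin (a / α)) atTop (𝓝 a) := by
    intro a
    have hd : HasDerivAt (fun t => Real.sin (a * t)) a 0 := by
      have := ((hasDerivAt_id (0:ℝ)).const_mul a).sin
      simpa using this
    have h2 := hd.tendsto_slope_zero
    have h3 : Tendsto (fun x : ℝ => x⁻¹) atTop (𝓝[≠] 0) :=
      tendsto_inv_atTop_nhdsGT_zero.mono_right (nhdsWithin_mono _ fun x hx => ne_of_gt hx)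
    refine (h2.comp h3).congr fun x => ?_
    simp [div_eq_mul_inv]
  refine ((hs θ).div (hs Real.pi) Real.pi_pos.ne').congr' ?_
  filter_upwards [eventually_gt_atTop 1] with α hα
  rw [Drift_eq hα h0 h1]
  exact mul_div_mul_left _ _ (by linarith)

theorem stmt_12 (θ : ℝ) (hθ : 0 < θ) (hθπ : θ < Real.pi) :
    (∀ α : ℝ, 1 < α → Drift θ α = Real.sin (θ / α) / Real.sin (Real.pi / α)) ∧
    StrictAntiOn (Drift θ) (Set.Ioi 1) ∧
    Tendsto (Drift θ) (nhdsWithin 1 (Set.Ioi 1)) atTop ∧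
    Tendsto (Drift θ) atTop (nhds (θ / Real.pi)) ∧
    (∃! α : ℝ, 1 < α ∧ Drift θ α = 1) ∧
    (∀ α : ℝ, 1 < α → (Drift θ α = 1 ↔ α = 1 + θ / Real.pi)) := by
  have hpi := Real.pi_pos
  have hα : 1 < 1 + θ / Real.pi := by have := div_pos hθ hpi; linarith
  have h1 := Drift_one hθ hθπ
  have hinj := (Drift_anti hθ hθπ).injOn
  refine ⟨fun α h => Drift_eq h hθ hθπ, Drift_anti hθ hθπ, Drift_atTop hθ hθπ,
    Drift_lim hθ hθπ, ⟨_, ⟨hα, h1⟩, fun β hβ => hinj hβ.1 hα (hβ.2.trans h1.symm)⟩,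
    fun β hβ => ⟨fun h => hinj hβ hα (h.trans h1.symm), fun h => h ▸ h1⟩⟩
end

section
/- Suppose there is K > 0 with Q_j ≤ j + K for all j ≥ 1. Then there exists A_0 > 0 such that for every A ≥ A_0 the sequence X̄ defined by X̄_k := (k + A)^{α_θ} satisfies φ_j(X̄, X̄) ≥ Q_j for all j ≥ 1. -/
open Filter Asymptotics MeasureTheory
open scoped ENNReal Topology

lemma aux_slit (x y : ℝ) (h0 : 0 ≤ y) (h1 : y < Real.pi) :
    1 + Complex.exp ((x : ℂ) + y * Complex.I) ∈ Complex.slitPlane := by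
  rw [Complex.mem_slitPlane_iff]
  rcases h0.eq_or_lt with h | h
  · left
    subst h
    simp [Complex.exp_re]
    positivity
  · right
    have := Real.sin_pos_of_pos_of_lt_pi h h1
    simp [Complex.exp_im]
    exact this.ne'

lemma aux_small (x y : ℝ) (hx : x ≤ -1) :
    ‖Complex.log (1 + Complex.exp ((x : ℂ) + y * Complex.I))‖ ≤ 3 / 2 * Real.exp x := by
  have hn : ‖Complex.exp ((x : ℂ) + y * Complex.I)‖ = Real.exp x := by
    simp [Complex.norm_exp]
  have : Real.exp x ≤ 1 / 2 := by
    have h1 : Real.exp x ≤ Real.exp (-1) := Real.exp_le_exp.2 hx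
    have h2 := Real.exp_one_gt_d9
    rw [Real.exp_neg] at h1
    refine h1.trans ?_
    rw [inv_le_comm₀ (by positivity) (by norm_num)]
    norm_num; linarith
  rw [← hn]
  apply Complex.norm_log_one_add_half_le_self
  rw [hn]; exact this

lemma aux_large (x y : ℝ) (hx : 1 ≤ x) :
    ‖Complex.log (1 + Complex.exp ((x : ℂ) + y * Complex.I))‖ ≤ x + 1 + Real.pi := by
  have hn : ‖Complex.exp ((x : ℂ) + y * Complex.I)‖ = Real.exp x := by
    simp [Complex.norm_exp]
  have h2 : 2 ≤ Real.exp x := by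
    have h1 : Real.exp 1 ≤ Real.exp x := Real.exp_le_exp.2 hx
    have h2 := Real.exp_one_gt_d9
    linarith
  set z := Complex.exp ((x : ℂ) + y * Complex.I)
  have hlow : 1 ≤ ‖1 + z‖ := by
    have := norm_sub_norm_le z (-1)
    rw [hn] at this
    simp at this
    rw [add_comm]; linarith
  have hup : ‖1 + z‖ ≤ Real.exp (x + 1) := by
    have := norm_add_le 1 z
    rw [hn] at this
    rw [Real.exp_add]
    have h3 := Real.exp_one_gt_d9
    simp at this
    nlinarith
  have e1 : |(Complex.log (1 + z)).re| ≤ x + 1 := by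
    rw [Complex.log_re, abs_of_nonneg (Real.log_nonneg hlow)]
    rw [Real.log_le_iff_le_exp (by linarith)]
    exact hup
  have e2 : |(Complex.log (1 + z)).im| ≤ Real.pi := by
    rw [Complex.log_im]; exact Complex.abs_arg_le_pi _
  exact (Complex.norm_le_abs_re_add_abs_im _).trans (add_le_add e1 e2)

noncomputable def hfun (α : ℝ) (w : ℂ) : ℂ :=
  Complex.exp w * Complex.log (1 + Complex.exp (-(α : ℂ) * w))

lemma aux_cont (α ψ : ℝ) (h0 : 0 ≤ ψ) (h1 : ψ < Real.pi) :
    Continuous (fun u : ℝ => (Real.exp u : ℂ) *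
      Complex.log (1 + Complex.exp (((-α * u : ℝ) : ℂ) + ψ * Complex.I))) := by
  apply Continuous.mul (by fun_prop)
  apply Continuous.clog (by fun_prop)
  intro x
  exact aux_slit _ _ h0 h1

noncomputable def Jint (α ψ U R : ℝ) : ℝ :=
  ∫ u in (-U)..R, Real.exp u * Complex.arg (1 + Complex.exp (((-α * u : ℝ) : ℂ) + ψ * Complex.I))

noncomputable def Eerr (α U R : ℝ) : ℝ :=
  Real.pi * (3 / 2 * Real.exp (-(α - 1) * R) + Real.exp (-U) * (α * U + 1 + Real.pi))

noncomputable def J0int (α U R : ℝ) : ℝ :=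
  ∫ u in (-U)..R, Real.exp u * Real.log (1 + Real.exp (-α * u))

lemma key (α U R ψ : ℝ) (hα : 1 < α) (hU : 1 ≤ α * U) (hR : 1 ≤ α * R)
    (h0 : 0 < ψ) (h1 : ψ < Real.pi) :
    |Jint α ψ U R - Real.sin (ψ / α) * J0int α U R| ≤ Eerr α U R := by
  set b := ψ / α with hb
  have hbα : α * b = ψ := by rw [hb]; field_simp
  have hb0 : 0 < b := by positivity
  have hbpi : b ≤ Real.pi := by
    rw [hb, div_le_iff₀ (by linarith)]; nlinarith [Real.pi_pos]
  have hform : ∀ u v : ℝ, hfun α ((u : ℂ) + (v : ℂ) * Complex.I) =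
      Complex.exp (v * Complex.I) * ((Real.exp u : ℂ) *
        Complex.log (1 + Complex.exp (((-α * u : ℝ) : ℂ) + (-α * v : ℝ) * Complex.I))) := by
    intro u v
    unfold hfun
    rw [Complex.exp_add, Complex.ofReal_exp]
    have : -(α : ℂ) * (u + v * Complex.I) = ((-α * u : ℝ) : ℂ) + (-α * v : ℝ) * Complex.I := by
      push_cast; ring
    rw [this]; ring
  have hrect := Complex.integral_boundary_rect_eq_zero_of_differentiableOn (hfun α)
    ⟨-U, -b⟩ ⟨R, 0⟩ (by
      intro w hw
      have hw2 := hw.2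
      simp only [Set.mem_preimage] at hw2
      rw [Set.uIcc_of_le (by linarith)] at hw2
      have hs : 1 + Complex.exp (-(α : ℂ) * w) ∈ Complex.slitPlane := by
        have := aux_slit (-α * w.re) (-α * w.im) (by nlinarith [hw2.2]) (by nlinarith [hw2.1])
        convert this using 3
        apply Complex.ext <;> simp
      apply DifferentiableAt.differentiableWithinAt
      unfold hfun
      apply DifferentiableAt.mul (by fun_prop)
      exact DifferentiableAt.clog (f := fun w => 1 + Complex.exp (-(α : ℂ) * w)) (by fun_prop) hs)
  simp only at hrect
  set V1 := ∫ y in (-b)..0, hfun α ((R : ℂ) + y * Complex.I) with hV1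
  set V2 := ∫ y in (-b)..0, hfun α (((-U : ℝ) : ℂ) + y * Complex.I) with hV2
  have hV1n : ‖V1‖ ≤ 3 / 2 * Real.exp (-(α - 1) * R) * Real.pi := by
    have := intervalIntegral.norm_integral_le_of_norm_le_const (a := -b) (b := 0)
      (f := fun y : ℝ => hfun α ((R : ℂ) + y * Complex.I))
      (C := 3 / 2 * Real.exp (-(α - 1) * R)) (by
        intro y hy
        rw [hform, norm_mul, norm_mul, Complex.norm_exp_ofReal_mul_I, one_mul,
          Complex.norm_real, Real.norm_of_nonneg (Real.exp_pos _).le]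
        have := aux_small (-α * R) (-α * y) (by linarith)
        calc _ ≤ Real.exp R * (3 / 2 * Real.exp (-α * R)) := by gcongr
          _ = _ := by
            rw [show -(α - 1) * R = R + -α * R by ring, Real.exp_add]; ring)
    refine this.trans ?_
    gcongr
    rw [zero_sub, neg_neg, abs_of_pos hb0]; exact hbpi
  have hV2n : ‖V2‖ ≤ Real.exp (-U) * (α * U + 1 + Real.pi) * Real.pi := by
    have := intervalIntegral.norm_integral_le_of_norm_le_const (a := -b) (b := 0)
      (f := fun y : ℝ => hfun α (((-U : ℝ) : ℂ) + y * Complex.I))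
      (C := Real.exp (-U) * (α * U + 1 + Real.pi)) (by
        intro y hy
        rw [hform, norm_mul, norm_mul, Complex.norm_exp_ofReal_mul_I, one_mul,
          Complex.norm_real, Real.norm_of_nonneg (Real.exp_pos _).le]
        have := aux_large (-α * -U) (-α * y) (by linarith)
        rw [show α * U = -α * -U by ring]
        gcongr)
    refine this.trans ?_
    have : 0 ≤ Real.pi := Real.pi_pos.le
    gcongr
    rw [zero_sub, neg_neg, abs_of_pos hb0]; exact hbpi
  set B := ∫ u in (-U)..R, (Real.exp u : ℂ) *
      Complex.log (1 + Complex.exp (((-α * u : ℝ) : ℂ) + ψ * Complex.I)) with hB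
  have hbot : (∫ x in (-U)..R, hfun α ((x : ℂ) + ((-b : ℝ) : ℂ) * Complex.I)) =
      Complex.exp (((-b : ℝ) : ℂ) * Complex.I) * B := by
    rw [hB, ← intervalIntegral.integral_const_mul]
    apply intervalIntegral.integral_congr
    intro u _
    simp only
    rw [hform, show -α * -b = ψ by linarith]
  have htop : (∫ x in (-U)..R, hfun α ((x : ℂ) + ((0 : ℝ) : ℂ) * Complex.I)) =
      (J0int α U R : ℂ) := by
    rw [J0int, ← intervalIntegral.integral_ofReal]
    apply intervalIntegral.integral_congr
    intro u _
    simp only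
    rw [hform, mul_zero, Complex.ofReal_mul (Real.exp u), Complex.ofReal_log (by positivity)]
    simp
  have hBim : B.im = Jint α ψ U R := by
    have := Complex.imCLM.intervalIntegral_comp_comm
      ((aux_cont α ψ h0.le h1).intervalIntegrable (μ := MeasureSpace.volume) (-U) R)
    rw [hB, Jint]
    simp only [Complex.imCLM_apply] at this
    rw [← this]
    apply intervalIntegral.integral_congr
    intro u _
    simp only
    rw [Complex.im_ofReal_mul, Complex.log_im]
  rw [hbot, htop] at hrect
  have hee : Complex.exp ((b : ℂ) * Complex.I) * Complex.exp (((-b : ℝ) : ℂ) * Complex.I) = 1 := by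
    rw [← Complex.exp_add]; simp
  have hBeq : B - Complex.exp ((b : ℂ) * Complex.I) * (J0int α U R : ℂ) =
      Complex.exp ((b : ℂ) * Complex.I) * (Complex.I * V2 - Complex.I * V1) := by
    simp only [smul_eq_mul] at hrect
    linear_combination Complex.exp ((b : ℂ) * Complex.I) * hrect - B * hee
  have him : (B - Complex.exp ((b : ℂ) * Complex.I) * (J0int α U R : ℂ)).im =
      Jint α ψ U R - Real.sin b * J0int α U R := by
    rw [Complex.sub_im, hBim, Complex.im_mul_ofReal, Complex.exp_ofReal_mul_I_im]
  rw [← him]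
  refine (Complex.abs_im_le_norm _).trans ?_
  rw [hBeq, norm_mul, Complex.norm_exp_ofReal_mul_I, one_mul]
  refine (norm_sub_le _ _).trans ?_
  rw [norm_mul, norm_mul, Complex.norm_I, one_mul, one_mul, Eerr]
  linarith

lemma arg_cont (α ψ : ℝ) (h0 : 0 ≤ ψ) (h1 : ψ < Real.pi) :
    Continuous (fun u : ℝ => Real.exp u *
      Complex.arg (1 + Complex.exp (((-α * u : ℝ) : ℂ) + ψ * Complex.I))) := by
  have := Complex.continuous_im.comp (aux_cont α ψ h0 h1)
  convert this using 2 with u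
  simp only [Function.comp]
  rw [Complex.im_ofReal_mul, Complex.log_im]

lemma arg_nn (x ψ : ℝ) (h0 : 0 ≤ ψ) (h1 : ψ ≤ Real.pi) :
    0 ≤ Complex.arg (1 + Complex.exp ((x : ℂ) + ψ * Complex.I)) := by
  rw [Complex.arg_nonneg_iff]
  have := Real.sin_nonneg_of_nonneg_of_le_pi h0 h1
  simp [Complex.exp_im]
  positivity

lemma low (α U R : ℝ) (hα : 1 < α) (hU : 1 ≤ α * U) (hR : 1 ≤ α * R) :
    Real.pi * (1 - Real.exp (-U)) - Eerr α U R ≤ Real.sin (Real.pi / α) * J0int α U R := by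
  have hU0 : 0 < U := by nlinarith
  have hR0 : 0 < R := by nlinarith
  have hev : ∀ᶠ ψ in 𝓝[<] Real.pi, 0 < ψ ∧ ψ < Real.pi :=
    Ioo_mem_nhdsLT Real.pi_pos
  have hT : Tendsto (fun ψ : ℝ => ∫ u in (-U)..0, Real.exp u *
      Complex.arg (1 + Complex.exp (((-α * u : ℝ) : ℂ) + ψ * Complex.I))) (𝓝[<] Real.pi)
      (𝓝 (∫ u in (-U)..0, Real.exp u * Real.pi)) := by
    apply intervalIntegral.tendsto_integral_filter_of_dominated_convergence
      (fun u => Real.exp u * Real.pi)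
    · filter_upwards [hev] with ψ hψ
      exact (arg_cont α ψ hψ.1.le hψ.2).aestronglyMeasurable
    · filter_upwards with ψ
      filter_upwards with u _
      rw [norm_mul, Real.norm_of_nonneg (Real.exp_pos _).le]
      gcongr
      exact Complex.abs_arg_le_pi _
    · apply Continuous.intervalIntegrable
      fun_prop
    · have hne : ∀ᵐ u : ℝ, u ≠ 0 := by
        simp [ae_iff]
      filter_upwards [hne] with u hu0 hu
      rw [Set.uIoc_of_le (by linarith)] at hu
      have hu' : u < 0 := lt_of_le_of_ne hu.2 hu0
      apply Tendsto.const_mul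
      have hx : 1 < Real.exp (-α * u) := by
        rw [Real.one_lt_exp_iff]; nlinarith
      have hpt := Complex.tendsto_arg_nhdsWithin_im_nonneg_of_re_neg_of_im_zero
        (z := 1 + Complex.exp (((-α * u : ℝ) : ℂ) + (Real.pi : ℝ) * Complex.I))
        (by rw [Complex.add_re, Complex.exp_re]; simp at hx ⊢; linarith)
        (by rw [Complex.add_im, Complex.exp_im]; simp)
      refine hpt.comp ?_
      apply tendsto_nhdsWithin_of_tendsto_nhds_of_eventually_within
      · apply tendsto_nhdsWithin_of_tendsto_nhds
        apply Continuous.tendsto (f := fun ψ : ℝ => 1 + Complex.exp (((-α * u : ℝ) : ℂ) + ψ * Complex.I))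
        fun_prop
      · filter_upwards [hev] with ψ hψ
        exact Complex.arg_nonneg_iff.1 (arg_nn _ _ hψ.1.le hψ.2.le)
  have hI : (∫ u in (-U)..0, Real.exp u * Real.pi) = Real.pi * (1 - Real.exp (-U)) := by
    rw [intervalIntegral.integral_mul_const, integral_exp, Real.exp_zero]; ring
  rw [hI] at hT
  have hS : Tendsto (fun ψ : ℝ => Real.sin (ψ / α) * J0int α U R + Eerr α U R) (𝓝[<] Real.pi)
      (𝓝 (Real.sin (Real.pi / α) * J0int α U R + Eerr α U R)) := by
    apply tendsto_nhdsWithin_of_tendsto_nhds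
    apply Continuous.tendsto (f := fun ψ : ℝ => Real.sin (ψ / α) * J0int α U R + Eerr α U R)
    fun_prop
  have := le_of_tendsto_of_tendsto hT hS (by
    filter_upwards [hev] with ψ hψ
    have hk := (abs_le.1 (key α U R ψ hα hU hR hψ.1 hψ.2)).2
    have hc := arg_cont α ψ hψ.1.le hψ.2
    have hadd := intervalIntegral.integral_add_adjacent_intervals
      (hc.intervalIntegrable (μ := MeasureSpace.volume) (-U) 0)
      (hc.intervalIntegrable (μ := MeasureSpace.volume) 0 R)
    have hnn := intervalIntegral.integral_nonneg (μ := MeasureSpace.volume) hR0.le (fun u _ =>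
      mul_nonneg (Real.exp_pos u).le (arg_nn (-α * u) ψ hψ.1.le hψ.2.le))
    rw [Jint, ← hadd] at hk
    linarith)
  linarith

lemma Eerr_small (α ε : ℝ) (hα : 1 < α) (hε : 0 < ε) :
    ∃ M : ℝ, 1 ≤ M ∧ ∀ U R : ℝ, M ≤ U → M ≤ R →
      Real.pi * Real.exp (-U) + 2 * Eerr α U R ≤ ε := by
  have e0 : Tendsto (fun U : ℝ => Real.exp (-U)) atTop (𝓝 0) :=
    Real.tendsto_exp_neg_atTop_nhds_zero
  have e1 : Tendsto (fun U : ℝ => U * Real.exp (-U)) atTop (𝓝 0) := by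
    simpa using Real.tendsto_pow_mul_exp_neg_atTop_nhds_zero 1
  have f1 : Tendsto (fun U : ℝ => Real.pi * Real.exp (-U) + 2 * Real.pi * (α * (U * Real.exp (-U))
      + (1 + Real.pi) * Real.exp (-U))) atTop (𝓝 0) := by
    simpa using (e0.const_mul Real.pi).add
      (((e1.const_mul α).add (e0.const_mul (1 + Real.pi))).const_mul (2 * Real.pi))
  have f2 : Tendsto (fun R : ℝ => 3 * Real.pi * Real.exp (-((α - 1) * R))) atTop (𝓝 0) := by
    have := e0.comp (tendsto_id.const_mul_atTop (show 0 < α - 1 by linarith))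
    simpa [Function.comp_def] using this.const_mul (3 * Real.pi)
  obtain ⟨M1, h1⟩ := eventually_atTop.1 (f1.eventually (ge_mem_nhds (show (0 : ℝ) < ε / 2 by linarith)))
  obtain ⟨M2, h2⟩ := eventually_atTop.1 (f2.eventually (ge_mem_nhds (show (0 : ℝ) < ε / 2 by linarith)))
  refine ⟨max 1 (max M1 M2), le_max_left _ _, fun U R hU hR => ?_⟩
  have a1 := h1 U (by simp at hU; exact hU.2.1)
  have a2 := h2 R (by simp at hR; exact hR.2.2)
  rw [Eerr, show -(α - 1) * R = -((α - 1) * R) by ring]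
  linarith

lemma Jlow (θ ε : ℝ) (hθ : 0 < θ) (hθπ : θ < Real.pi) (hε : 0 < ε) :
    ∃ M : ℝ, 1 ≤ M ∧ ∀ U R : ℝ, M ≤ U → M ≤ R →
      Real.pi - ε ≤ Jint (1 + θ / Real.pi) θ U R := by
  have hp := Real.pi_pos
  have hα : 1 < 1 + θ / Real.pi := by
    have : 0 < θ / Real.pi := by positivity
    linarith
  obtain ⟨M, hM1, hM⟩ := Eerr_small (1 + θ / Real.pi) ε hα hε
  refine ⟨M, hM1, fun U R hU hR => ?_⟩
  have hE := hM U R hU hR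
  have a1 := low (1 + θ / Real.pi) U R hα (by nlinarith) (by nlinarith)
  have a2 := (abs_le.1 (key (1 + θ / Real.pi) U R θ hα (by nlinarith) (by nlinarith) hθ hθπ)).1
  have hs : Real.sin (θ / (1 + θ / Real.pi)) = Real.sin (Real.pi / (1 + θ / Real.pi)) := by
    rw [← Real.sin_pi_sub]
    congr 1
    field_simp
    ring
  rw [hs] at a2
  linarith

lemma argadd_antitone (z : ℂ) (hz : 0 < z.im) : Antitone (fun a : ℝ => Complex.arg ((a : ℂ) + z)) := by
  have hd : ∀ a : ℝ, HasDerivAt (fun a : ℝ => Complex.arg ((a : ℂ) + z)) ((1 / ((a : ℂ) + z)).im) a := by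
    intro a
    have hs : (a : ℂ) + z ∈ Complex.slitPlane := by
      rw [Complex.mem_slitPlane_iff]; right; simp; exact hz.ne'
    have h1 : HasDerivAt (fun a : ℝ => (a : ℂ) + z) 1 a := by
      simpa using (Complex.ofRealCLM.hasDerivAt (x := a)).add_const z
    have h2 := h1.clog_real hs
    have h3 := Complex.imCLM.hasFDerivAt.comp_hasDerivAt a h2
    simpa [Function.comp_def, Complex.log_im] using h3
  apply antitone_of_deriv_nonpos (fun a => (hd a).differentiableAt)
  intro a
  rw [(hd a).deriv, one_div, Complex.inv_im]
  apply div_nonpos_of_nonpos_of_nonneg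
  · simp; exact hz.le
  · exact Complex.normSq_nonneg _

lemma zim (θ E : ℝ) (hθ : 0 < θ) (hθπ : θ < Real.pi) (hE : 0 < E) :
    0 < ((E : ℂ) * Complex.exp (θ * Complex.I)).im := by
  have := Real.sin_pos_of_pos_of_lt_pi hθ hθπ
  rw [Complex.im_ofReal_mul, Complex.exp_ofReal_mul_I_im]
  positivity

lemma Theta_nn (θ a E : ℝ) (hθ : 0 < θ) (hθπ : θ < Real.pi) (hE : 0 < E) : 0 ≤ Theta θ a E := by
  rw [Theta, Complex.arg_nonneg_iff]
  have := zim θ E hθ hθπ hE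
  rw [Complex.add_im, Complex.ofReal_im]; linarith

lemma Theta_le (θ a E : ℝ) (hθ : 0 < θ) (hθπ : θ < Real.pi) (hE : 0 < E) (ha : 0 ≤ a) :
    Theta θ a E ≤ θ := by
  have := argadd_antitone _ (zim θ E hθ hθπ hE) ha
  simp only [Complex.ofReal_zero, zero_add] at this
  rw [Complex.arg_real_mul _ hE, Complex.arg_exp_mul_I,
    (toIocMod_eq_self Real.two_pi_pos).2 ⟨by linarith, by linarith⟩] at this
  exact this

lemma Theta_scale (θ α n u : ℝ) (hn : 0 < n) :
    Theta θ ((n * Real.exp u) ^ α) (n ^ α) =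
      Complex.arg (1 + Complex.exp (((-α * u : ℝ) : ℂ) + θ * Complex.I)) := by
  have hpos : 0 < (n * Real.exp u) ^ α := by positivity
  rw [← Complex.arg_real_mul _ hpos, Theta]
  congr 1
  rw [mul_add, mul_one, Complex.exp_add, ← mul_assoc, ← Complex.ofReal_exp, ← Complex.ofReal_mul]
  congr 4
  rw [Real.mul_rpow hn.le (Real.exp_pos _).le, ← Real.exp_mul, mul_assoc, ← Real.exp_add]
  rw [show u * α + -α * u = 0 by ring]; simp

lemma sum_low (θ n A : ℝ) (N : ℕ) (hθ : 0 < θ) (hθπ : θ < Real.pi) (hn : 0 < n) (hA : 0 < A)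
    (U : ℝ) (hU : -U ≤ Real.log ((1 + A) / n)) :
    n * Jint (1 + θ / Real.pi) θ U (Real.log ((1 + A + N) / n)) - θ * (1 + A) ≤
      ∑ k ∈ Finset.range N,
        Theta θ ((((k + 1 : ℕ) : ℝ) + A) ^ (1 + θ / Real.pi)) (n ^ (1 + θ / Real.pi)) := by
  have hp := Real.pi_pos
  set α := 1 + θ / Real.pi with hα
  have hα0 : 0 < α := by positivity
  have hnα : 0 < n ^ α := by positivity
  set f : ℝ → ℝ := fun x => Theta θ (x ^ α) (n ^ α) with hf
  have hanti : AntitoneOn f (Set.Icc (1 + A) (1 + A + N)) := by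
    intro x hx y hy hxy
    apply argadd_antitone _ (zim θ _ hθ hθπ hnα)
    exact Real.rpow_le_rpow (by linarith [hx.1]) hxy hα0.le
  have h1 := hanti.integral_le_sum
  set a := Real.log ((1 + A) / n)
  set b := Real.log ((1 + A + N) / n)
  set g : ℝ → ℝ := fun u => Real.exp u *
      Complex.arg (1 + Complex.exp (((-α * u : ℝ) : ℂ) + θ * Complex.I)) with hg
  have hgc : Continuous g := arg_cont α θ hθ.le hθπ
  have hea : n * Real.exp a = 1 + A := by
    rw [Real.exp_log (by positivity)]; field_simp
  have heb : n * Real.exp b = 1 + A + N := by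
    rw [Real.exp_log (by positivity)]; field_simp
  have hsub : n * ∫ u in a..b, g u = ∫ x in (1 + A)..(1 + A + N), f x := by
    have := intervalIntegral.integral_comp_mul_deriv' (a := a) (b := b)
      (f := fun u => n * Real.exp u) (f' := fun u => n * Real.exp u) (g := f)
      (fun u _ => (Real.hasDerivAt_exp u).const_mul n) (by fun_prop) (by
        rintro _ ⟨u, _, rfl⟩
        apply ContinuousAt.continuousWithinAt
        have hx : 0 < n * Real.exp u := by positivity
        simp only [hf, Theta]
        apply ContinuousAt.comp (g := Complex.arg)
        · apply Complex.continuousAt_arg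
          rw [Complex.mem_slitPlane_iff]; right
          rw [Complex.add_im, Complex.ofReal_im]
          have := zim θ _ hθ hθπ hnα
          linarith
        · apply ContinuousAt.add _ continuousAt_const
          apply Complex.continuous_ofReal.continuousAt.comp
          exact Real.continuousAt_rpow_const _ _ (Or.inl hx.ne'))
    simp only [hea, heb] at this
    rw [← this, ← intervalIntegral.integral_const_mul]
    apply intervalIntegral.integral_congr
    intro u _
    simp only [hf, hg, Function.comp]
    rw [Theta_scale _ _ _ _ hn]; ring
  have hJ : Jint α θ U b = (∫ u in (-U)..a, g u) + ∫ u in a..b, g u := by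
    rw [intervalIntegral.integral_add_adjacent_intervals (hgc.intervalIntegrable _ _)
      (hgc.intervalIntegrable _ _)]
    rfl
  have hsm : ∫ u in (-U)..a, g u ≤ θ * Real.exp a := by
    have : ∫ u in (-U)..a, g u ≤ ∫ u in (-U)..a, Real.exp u * θ := by
      apply intervalIntegral.integral_mono_on hU (hgc.intervalIntegrable _ _)
      · apply Continuous.intervalIntegrable; fun_prop
      · intro u _
        simp only [hg]
        rw [← Theta_scale θ α n u hn]
        gcongr
        exact Theta_le _ _ _ hθ hθπ hnα (by positivity)
    refine this.trans ?_
    rw [intervalIntegral.integral_mul_const, integral_exp]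
    have := Real.exp_pos (-U)
    nlinarith
  have hsum : ∑ k ∈ Finset.range N, f (1 + A + k) = ∑ k ∈ Finset.range N,
        Theta θ ((((k + 1 : ℕ) : ℝ) + A) ^ α) (n ^ α) := by
    apply Finset.sum_congr rfl
    intro k _
    simp only [hf]
    congr 2
    push_cast; ring
  rw [← hsum]
  refine le_trans ?_ h1
  rw [hJ, ← hsub]
  have : n * ∫ u in (-U)..a, g u ≤ n * (θ * Real.exp a) := by gcongr
  have e : n * (θ * Real.exp a) = θ * (1 + A) := by rw [← hea]; ring
  linarith

theorem stmt_13 (θ : ℝ) (hθ : 0 < θ) (hθπ : θ < Real.pi)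
    (Q : ℕ → ℝ) (hQpos : ∀ k, 1 ≤ k → 0 < Q k)
    (K : ℝ) (hK : 0 < K) (hQK : ∀ j : ℕ, 1 ≤ j → Q j ≤ (j : ℝ) + K) :
    ∃ A₀ : ℝ, 0 < A₀ ∧ ∀ A : ℝ, A₀ ≤ A → ∀ j : ℕ, 1 ≤ j →
      ENNReal.ofReal (Q j) ≤
        phi θ (fun k : ℕ => ((k : ℝ) + A) ^ (1 + θ / Real.pi))
          (fun k : ℕ => ((k : ℝ) + A) ^ (1 + θ / Real.pi)) j := by
  have hp := Real.pi_pos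
  have hd : 0 < Real.pi - θ := by linarith
  refine ⟨(Real.pi * K + θ + 1) / (Real.pi - θ), by positivity, fun A hA j hj => ?_⟩
  have hA0 : 0 < A := lt_of_lt_of_le (by positivity) hA
  rw [div_le_iff₀ hd] at hA
  set n : ℝ := (j : ℝ) + A with hn
  have hn0 : 0 < n := by positivity
  obtain ⟨M, hM1, hM⟩ := Jlow θ (1 / n) hθ hθπ (by positivity)
  obtain ⟨N, hN⟩ := exists_nat_ge (n * Real.exp M)
  set U := max M (-Real.log ((1 + A) / n)) with hU
  have hR : M ≤ Real.log ((1 + A + N) / n) := by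
    rw [Real.le_log_iff_exp_le (by positivity), le_div_iff₀ hn0]; linarith
  have hs := sum_low θ n A N hθ hθπ hn0 hA0 U (by
    have := le_max_right M (-Real.log ((1 + A) / n)); linarith)
  have hJ := hM U _ (le_max_left _ _) hR
  have hJn := mul_le_mul_of_nonneg_left hJ hn0.le
  have hen : n * (Real.pi - 1 / n) = n * Real.pi - 1 := by field_simp
  rw [hen] at hJn
  set S := ∑ k ∈ Finset.range N,
        Theta θ ((((k + 1 : ℕ) : ℝ) + A) ^ (1 + θ / Real.pi)) (n ^ (1 + θ / Real.pi)) with hS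
  have hQS : Q j ≤ 1 / Real.pi * S := by
    rw [one_div, ← div_eq_inv_mul, le_div_iff₀ hp]
    have := mul_le_mul_of_nonneg_right (hQK j hj) hp.le
    rw [hn] at hJn hs
    nlinarith
  refine (ENNReal.ofReal_le_ofReal hQS).trans ?_
  rw [ENNReal.ofReal_mul (by positivity), phi]
  gcongr
  rw [hS, ENNReal.ofReal_sum_of_nonneg (fun k _ => Theta_nn _ _ _ hθ hθπ (by positivity))]
  exact ENNReal.sum_le_tsum (f := fun k : ℕ => ENNReal.ofReal
    (Theta θ ((((k + 1 : ℕ) : ℝ) + A) ^ (1 + θ / Real.pi)) (n ^ (1 + θ / Real.pi)))) _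
end
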